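/- Let $R$ be a Noetherian ring of prime characteristic $p$, let $J \subseteq R$ be an ideal such that $R/J$ has finite projective dimension and $J$ has no embedded primes, and let $q$ be a power of $p$. Then $\operatorname{Ass}_R(R/J^{[q]}) = \operatorname{Ass}_R(R/J) = \operatorname{Min}(R/J)$; consequently, for any ideal $I$ with $J \subseteq I$, $\operatorname{Ass}(I^{[q]}/J^{[q]}) \subseteq \operatorname{Min}(R/J)$ and $H^0_{\mathfrak{p}}(I^{[q]}/J^{[q]}) = 0$ for every prime $\mathfrak{p} \notin \operatorname{Min}(R/J)$. -/

import Mathlib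

section defs

variable {R : Type*} [CommRing R]

/-- The Frobenius bracket power `K^{[q]}`. -/
def bracketPow (K : Ideal R) (q : ℕ) : Ideal R :=
  Ideal.span ((fun a => a ^ q) '' (K : Set R))

/-- For ideals `J ⊆ I`, the `R`-module `I/J`, realized as the image of `I` in `R/J`. -/
def subQuot (J I : Ideal R) : Submodule R (R ⧸ J) :=
  Submodule.map J.mkQ I

/-- The `I`-torsion submodule `Γ_I(M)` (zeroth local cohomology). -/
def gammaTorsion (I : Ideal R) (M : Type*) [AddCommGroup M] [Module R M] :
    Submodule R M where
  carrier := {z | ∃ n : ℕ, ∀ a ∈ I ^ n, a • z = 0}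
  zero_mem' := ⟨0, fun a _ => smul_zero a⟩
  add_mem' := by
    rintro x y ⟨n, hn⟩ ⟨m, hm⟩
    refine ⟨n + m, fun a ha => ?_⟩
    rw [smul_add, hn a (Ideal.pow_le_pow_right (Nat.le_add_right n m) ha),
      hm a (Ideal.pow_le_pow_right (Nat.le_add_left m n) ha), add_zero]
  smul_mem' := by
    rintro r x ⟨n, hn⟩
    exact ⟨n, fun a ha => by rw [smul_comm, hn a ha, smul_zero]⟩

/-- A module has finite projective dimension iff it admits a projective resolution
which vanishes in all sufficiently high degrees. -/
def HasFiniteProjectiveDimension (R : Type*) [CommRing R] (M : Type*) [AddCommGroup M]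
    [Module R M] : Prop :=
  ∃ (P : CategoryTheory.ProjectiveResolution (ModuleCat.of R M)) (n : ℕ),
    ∀ i : ℕ, n < i → CategoryTheory.Limits.IsZero (P.complex.X i)

end defs

/-!
For a prime `P`, `P ∈ Ass M` means `depth M_P = 0`, so it suffices to show that the Frobenius
functor preserves the depth of a finite module of finite projective dimension over a local ring.
Both `M` and its Frobenius pullback satisfy the Auslander–Buchsbaum formula with the same projective
dimension `n`: a minimal resolution pulls back to a minimal resolution, provided that it stays exact
(Peskine–Szpiro). Exactness is an induction on `n`. A kernel arising on a first syzygy would have an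
associated prime `P`. If `n` drops on localizing at `P`, induction applies over `R_P`; if not, then
`depth R_P ≥ n`, so the pullback of the syzygy, of projective dimension less than `n`, has positive
depth at `P`, and neither it nor its submodules have `P` as an associated prime.
-/

universe u

open CategoryTheory Abelian IsLocalRing

section DualBasis

variable {R : Type*} [CommRing R] {N M : Type*} [AddCommGroup N] [Module R N]
  [AddCommGroup M] [Module R M]

lemma exists_sum_smulRight_eq_id [Module.Finite R N] [Module.Projective R N] :
    ∃ (n : ℕ) (φ : Fin n → Module.Dual R N) (b : Fin n → N),
      ∑ i, (φ i).smulRight (b i) = LinearMap.id := by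
  obtain ⟨n, f, g, -, -, hfg⟩ := Module.Finite.exists_comp_eq_id_of_projective R N
  refine ⟨n, fun i => LinearMap.proj i ∘ₗ g, fun i => f (Pi.single i 1), ?_⟩
  rw [← hfg]
  ext x
  simp [LinearMap.sum_apply, ← map_smul, ← map_sum, ← Pi.single_smul', Finset.univ_sum_single]

lemma mem_smul_top_of_range_le_smul_top [Module.Finite R N] [Module.Projective R N] {I : Ideal R}
    {f : N →ₗ[R] M} (hf : LinearMap.range f ≤ I • ⊤) : f ∈ I • (⊤ : Submodule R (N →ₗ[R] M)) := by
  obtain ⟨n, φ, b, hφ⟩ := exists_sum_smulRight_eq_id (R := R) (N := N)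
  have hsum : f = ∑ i, (φ i).smulRight (f (b i)) := by
    conv_lhs => rw [← f.comp_id, ← hφ]
    ext x
    simp [LinearMap.sum_apply]
  rw [hsum]
  refine Submodule.sum_mem _ fun i _ => ?_
  have hmap : (I • ⊤ : Submodule R M).map (LinearMap.smulRightₗ (φ i)) ≤ I • ⊤ := by
    rw [Submodule.map_smul'']
    exact Submodule.smul_mono le_rfl le_top
  exact hmap (Submodule.mem_map_of_mem (hf ⟨b i, rfl⟩))

end DualBasis

section Depth

variable {R : Type u} [CommRing R] [IsLocalRing R]

/-- The group `Extⁱ(k, M)`, where `k` is the residue field of the local ring `R`. -/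
abbrev ExtResidueField (M : ModuleCat.{u} R) (i : ℕ) : Type u :=
  Ext.{u} (ModuleCat.of R (ResidueField R)) M i

/-- The depth of a module over a local ring, in its homological form: the least `i` with
`Extⁱ(k, M) ≠ 0`, where `k` is the residue field, and `⊤` if there is none. -/
noncomputable def depth (M : ModuleCat.{u} R) : ℕ∞ :=
  ⨅ (i : ℕ) (_ : Nontrivial (ExtResidueField M i)), (i : ℕ∞)

lemma le_depth_iff {M : ModuleCat.{u} R} {n : ℕ∞} :
    n ≤ depth M ↔ ∀ i : ℕ, i < n → Subsingleton (ExtResidueField M i) := by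
  simp only [depth, le_iInf₂_iff, ← not_nontrivial_iff_subsingleton]
  exact forall_congr' fun i => by rw [← not_lt, imp_not_comm]

lemma depth_le_of_retract {M N : ModuleCat.{u} R} (r : Retract M N) : depth N ≤ depth M := by
  refine le_depth_iff.2 fun i hi => ⟨fun x y => ?_⟩
  have := le_depth_iff.1 le_rfl i hi
  have hr (z : ExtResidueField M i) :
      (z.comp (Ext.mk₀ r.i) (add_zero i)).comp (Ext.mk₀ r.r) (add_zero i) = z := by
    rw [Ext.comp_assoc_of_third_deg_zero, Ext.mk₀_comp_mk₀, r.retract, Ext.comp_mk₀_id]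
  rw [← hr x, ← hr y, Subsingleton.elim (x.comp (Ext.mk₀ r.i) _) (y.comp (Ext.mk₀ r.i) _)]

lemma depth_eq_of_iso {M N : ModuleCat.{u} R} (e : M ≅ N) : depth M = depth N :=
  (depth_le_of_retract e.symm.retract).antisymm (depth_le_of_retract e.retract)

lemma depth_le_depth_of_projective (N : ModuleCat.{u} R) [Module.Finite R N]
    [Module.Projective R N] : depth (ModuleCat.of R R) ≤ depth N := by
  obtain ⟨n, φ, b, hφ⟩ := exists_sum_smulRight_eq_id (R := R) (N := N)
  have hid : 𝟙 N = ∑ i, ModuleCat.ofHom (φ i) ≫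
      ModuleCat.ofHom (LinearMap.toSpanSingleton R N (b i)) := by
    ext x
    simpa [LinearMap.sum_apply] using congr($hφ.symm x)
  refine le_depth_iff.2 fun i hi => subsingleton_of_forall_eq 0 fun x => ?_
  have := le_depth_iff.1 le_rfl i hi
  rw [← Ext.comp_mk₀_id x, hid, Ext.mk₀_sum, Ext.comp_sum]
  refine Finset.sum_eq_zero fun j _ => ?_
  rw [← Ext.mk₀_comp_mk₀, ← Ext.comp_assoc_of_third_deg_zero,
    Subsingleton.elim (x.comp (Ext.mk₀ (ModuleCat.ofHom (φ j))) _) 0, Ext.zero_comp]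

lemma one_le_depth_iff {M : ModuleCat.{u} R} :
    1 ≤ depth M ↔ Subsingleton (ModuleCat.of R (ResidueField R) ⟶ M) := by
  rw [le_depth_iff, ← Ext.homEquiv₀.subsingleton_congr]
  refine ⟨fun h => h 0 one_pos, fun h i hi => ?_⟩
  obtain rfl : i = 0 := by simpa using hi
  exact h

lemma depth_eq_zero_iff [IsNoetherianRing R] {M : ModuleCat.{u} R} :
    depth M = 0 ↔ maximalIdeal R ∈ associatedPrimes R M := by
  rw [← not_iff_not, ← ne_eq, ← Order.one_le_iff_ne_zero, one_le_depth_iff,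
    AssociatedPrimes.mem_iff, isAssociatedPrime_iff_exists_injective_linearMap]
  have : IsSimpleModule R (ModuleCat.of R (ResidueField R)) :=
    isSimpleModule_iff_isCoatom.2 (maximalIdeal.isMaximal R).out
  constructor
  · rintro h ⟨-, f, hf⟩
    let g : ModuleCat.of R (ResidueField R) ⟶ M := ModuleCat.ofHom f
    have hg (x : ResidueField R) : f x = 0 := congr($(Subsingleton.elim g 0).hom x)
    exact one_ne_zero (α := ResidueField R) (hf ((hg 1).trans (map_zero f).symm))
  · refine fun h => subsingleton_of_forall_eq 0 fun g => ModuleCat.hom_ext ?_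
    exact (LinearMap.injective_or_eq_zero g.hom).resolve_left fun hg => h ⟨inferInstance, g.hom, hg⟩

lemma le_depth_X₃ {S : ShortComplex (ModuleCat.{u} R)} (hS : S.ShortExact) {n : ℕ∞}
    (h₁ : n + 1 ≤ depth S.X₁) (h₂ : n ≤ depth S.X₂) : n ≤ depth S.X₃ := by
  refine le_depth_iff.2 fun i hi => subsingleton_of_forall_eq 0 fun x => ?_
  have := le_depth_iff.1 h₁ (i + 1) (by simpa using hi)
  have := le_depth_iff.1 h₂ i hi
  obtain ⟨y, rfl⟩ := Ext.covariant_sequence_exact₃ _ hS x rfl (Subsingleton.elim _ 0)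
  rw [Subsingleton.elim y 0, Ext.zero_comp]

lemma succ_le_depth_X₁ {S : ShortComplex (ModuleCat.{u} R)} (hS : S.ShortExact) {n : ℕ∞}
    (h₃ : n ≤ depth S.X₃) (hf : ∀ i : ℕ, i < n + 1 → ∀ x : ExtResidueField S.X₁ i,
      x.comp (Ext.mk₀ S.f) (add_zero i) = 0) : n + 1 ≤ depth S.X₁ := by
  refine le_depth_iff.2 fun i hi => subsingleton_of_forall_eq 0 fun x => ?_
  obtain _ | i := i
  · have := hS.mono_f
    exact Ext.postcomp_mk₀_injective_of_mono _ S.f ((hf 0 hi x).trans (map_zero _).symm)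
  · have := le_depth_iff.1 h₃ i (by simpa using hi)
    obtain ⟨y, rfl⟩ := Ext.covariant_sequence_exact₁ _ hS x (hf _ hi x) rfl
    rw [Subsingleton.elim y 0, Ext.zero_comp]

lemma smul_extResidueField_eq_zero {M : ModuleCat.{u} R} {i : ℕ} {a : R} (ha : a ∈ maximalIdeal R)
    (x : ExtResidueField M i) : a • x = 0 := by
  have hid : a • 𝟙 (ModuleCat.of R (ResidueField R)) = 0 := by
    ext y
    change algebraMap R (ResidueField R) a * y = 0
    rw [ResidueField.algebraMap_eq, (residue_eq_zero_iff a).2 ha, zero_mul]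
  rw [← Ext.mk₀_id_comp x, ← Ext.smul_comp, ← Ext.mk₀_smul, hid, Ext.mk₀_zero, Ext.zero_comp]

lemma extResidueField_comp_eq_zero {M N : ModuleCat.{u} R} {f : M ⟶ N}
    (hf : f.hom ∈ maximalIdeal R • (⊤ : Submodule R (M →ₗ[R] N))) {i : ℕ}
    (x : ExtResidueField M i) : x.comp (Ext.mk₀ f) (add_zero i) = 0 := by
  refine Submodule.smul_induction_on
    (p := fun g => x.comp (Ext.mk₀ (ModuleCat.ofHom g)) (add_zero i) = 0) hf
    (fun a ha g _ => ?_) fun g h hg hh => ?_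
  · have hsmul : ModuleCat.ofHom (a • g) = a • ModuleCat.ofHom g := rfl
    rw [hsmul, Ext.mk₀_smul, Ext.comp_smul, smul_extResidueField_eq_zero ha]
  · rw [ModuleCat.ofHom_add, Ext.mk₀_add, Ext.comp_add, hg, hh, add_zero]

end Depth

section Syzygy

variable {R : Type u} [CommRing R]

/-- A short exact sequence `0 → X₁ → X₂ → X₃ → 0` of modules with `X₂` finite projective, which
presents `X₁` as a first syzygy of `X₃`. -/
structure IsSyzygySequence (S : ShortComplex (ModuleCat.{u} R)) : Prop extends S.ShortExact where
  projective : Projective S.X₂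
  finite : Module.Finite R S.X₂

lemma isSyzygySequence_shortComplexKer {M : Type u} [AddCommGroup M] [Module R M] {n : ℕ}
    {f : (Fin n → R) →ₗ[R] M} (hf : Function.Surjective f) :
    IsSyzygySequence f.shortComplexKer where
  __ := LinearMap.shortExact_shortComplexKer hf
  projective := ModuleCat.projective_of_categoryTheory_projective (ModuleCat.of R (Fin n → R))
  finite := inferInstanceAs (Module.Finite R (Fin n → R))

lemma exists_isSyzygySequence (M : ModuleCat.{u} R) [Module.Finite R M] :
    ∃ S : ShortComplex (ModuleCat.{u} R), IsSyzygySequence S ∧ S.X₃ = M := by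
  obtain ⟨n, f, hf⟩ := Module.Finite.exists_fin' R M
  exact ⟨f.shortComplexKer, isSyzygySequence_shortComplexKer hf, rfl⟩

namespace IsSyzygySequence

variable {S : ShortComplex (ModuleCat.{u} R)}

lemma finite_X₁ [IsNoetherianRing R] (hS : IsSyzygySequence S) : Module.Finite R S.X₁ :=
  have := hS.finite
  .of_injective S.f.hom ((ModuleCat.mono_iff_injective _).1 hS.mono_f)

lemma finite_X₃ (hS : IsSyzygySequence S) : Module.Finite R S.X₃ :=
  have := hS.finite
  .of_surjective S.g.hom ((ModuleCat.epi_iff_surjective _).1 hS.epi_g)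

lemma hasProjectiveDimensionLT_X₃_iff (hS : IsSyzygySequence S) {n : ℕ} :
    HasProjectiveDimensionLT S.X₃ (n + 2) ↔ HasProjectiveDimensionLT S.X₁ (n + 1) :=
  hS.toShortExact.hasProjectiveDimensionLT_X₃_iff n hS.projective

lemma hasProjectiveDimensionLT_X₃ (hS : IsSyzygySequence S) {n : ℕ}
    (h : HasProjectiveDimensionLT S.X₁ n) : HasProjectiveDimensionLT S.X₃ (n + 1) :=
  have := hS.projective
  hS.toShortExact.hasProjectiveDimensionLT_X₃ n h inferInstance

end IsSyzygySequence

variable [IsLocalRing R]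

open TensorProduct in
lemma exists_surjective_ker_le_maximalIdeal_smul (M : Type*) [AddCommGroup M] [Module R M]
    [Module.Finite R M] : ∃ (n : ℕ) (f : (Fin n → R) →ₗ[R] M), Function.Surjective f ∧
      LinearMap.ker f ≤ maximalIdeal R • ⊤ := by
  let w := Module.finBasis (ResidueField R) (ResidueField R ⊗[R] M)
  obtain ⟨v, hv⟩ := (TensorProduct.mk_surjective R M (ResidueField R)
    residue_surjective).comp_left w
  have hv i : (1 : ResidueField R) ⊗ₜ[R] v i = w i := congr_fun hv i
  refine ⟨_, Fintype.linearCombination R v, ?_, fun x hx => ?_⟩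
  · rw [← LinearMap.range_eq_top, Fintype.range_linearCombination]
    exact span_eq_top_of_tmul_eq_basis v w hv
  have hxw : ∑ i, residue R (x i) • w i = 0 := by
    have h0 : (1 : ResidueField R) ⊗ₜ[R] Fintype.linearCombination R v x = 0 := by
      rw [LinearMap.mem_ker.1 hx, tmul_zero]
    simpa [Fintype.linearCombination_apply, tmul_sum, hv, ← ResidueField.algebraMap_eq] using h0
  rw [pi_eq_sum_univ x]
  exact Submodule.sum_mem _ fun i _ => Submodule.smul_mem_smul
    ((residue_eq_zero_iff _).1 (Fintype.linearIndependent_iff.1 w.linearIndependent _ hxw i))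
    trivial

lemma exists_isSyzygySequence_range_le (M : ModuleCat.{u} R) [Module.Finite R M] :
    ∃ S : ShortComplex (ModuleCat.{u} R), IsSyzygySequence S ∧ S.X₃ = M ∧
      LinearMap.range S.f.hom ≤ maximalIdeal R • ⊤ := by
  obtain ⟨n, f, hf, hker⟩ := exists_surjective_ker_le_maximalIdeal_smul (R := R) M
  exact ⟨f.shortComplexKer, isSyzygySequence_shortComplexKer hf, rfl,
    (Submodule.range_subtype _).trans_le hker⟩

end Syzygy

section ExtendScalars

open Limits TensorProduct

variable {R S : Type u} [CommRing R] [CommRing S] (f : R →+* S)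

instance extendScalars_additive : (ModuleCat.extendScalars.{u, u, u} f).Additive :=
  (ModuleCat.extendRestrictScalarsAdj.{u, u, u} f).left_adjoint_additive

instance extendScalars_obj_projective (M : ModuleCat.{u} R) [hM : Projective M] :
    Projective ((ModuleCat.extendScalars.{u, u, u} f).obj M) :=
  (ModuleCat.extendRestrictScalarsAdj.{u, u, u} f).map_projective M hM

instance extendScalars_obj_finite (M : ModuleCat.{u} R) [Module.Finite R M] :
    Module.Finite S ((ModuleCat.extendScalars.{u, u, u} f).obj M) := by
  algebraize [f]
  exact inferInstanceAs (Module.Finite S (S ⊗[R] M))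

variable {f}

lemma shortExact_map_extendScalars {T : ShortComplex (ModuleCat.{u} R)} (hT : T.ShortExact)
    (h : Mono ((ModuleCat.extendScalars.{u, u, u} f).map T.f)) :
    (T.map (ModuleCat.extendScalars.{u, u, u} f)).ShortExact := by
  have hiff := (Functor.preservesFiniteColimits_tfae
    (ModuleCat.extendScalars.{u, u, u} f)).out 3 0
  have hF := hiff.1 inferInstance T hT
  exact { exact := hF.1, mono_f := h, epi_g := hF.2 }

lemma mono_map_extendScalars_of_projective {T : ShortComplex (ModuleCat.{u} R)}
    (hT : T.ShortExact) [Projective T.X₃] : Mono ((ModuleCat.extendScalars.{u, u, u} f).map T.f) :=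
  have := hT.splittingOfProjective.isSplitMono_f
  inferInstance

lemma mono_map_extendScalars_of_flat (hf : f.Flat) {M N : ModuleCat.{u} R} (g : M ⟶ N) [Mono g] :
    Mono ((ModuleCat.extendScalars.{u, u, u} f).map g) :=
  have := ModuleCat.preservesFiniteLimits_extendScalars_of_flat hf
  inferInstance

variable (f) in
/-- Extension of scalars along `f` keeps the syzygy sequences of modules of projective dimension
less than `n` exact; only injectivity on the left has to be required, as extension of scalars is
right exact. -/
def PreservesSyzygySequences (n : ℕ) : Prop :=
  ∀ T : ShortComplex (ModuleCat.{u} R), IsSyzygySequence T → HasProjectiveDimensionLT T.X₃ n →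
    Mono ((ModuleCat.extendScalars.{u, u, u} f).map T.f)

namespace PreservesSyzygySequences

lemma of_flat (hf : f.Flat) (n : ℕ) : PreservesSyzygySequences f n :=
  fun T hT _ => have := hT.mono_f; mono_map_extendScalars_of_flat hf T.f

variable (f) in
lemma one : PreservesSyzygySequences f 1 := fun _ hT h =>
  have := projective_iff_hasProjectiveDimensionLT_one.2 h
  mono_map_extendScalars_of_projective hT.toShortExact

lemma of_le {m n : ℕ} (hf : PreservesSyzygySequences f n) (hmn : m ≤ n) :
    PreservesSyzygySequences f m :=
  fun T hT _ => hf T hT (hasProjectiveDimensionLT_of_ge _ m n hmn)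

lemma isSyzygySequence_map {n : ℕ} (hf : PreservesSyzygySequences f n)
    {T : ShortComplex (ModuleCat.{u} R)} (hT : IsSyzygySequence T)
    [HasProjectiveDimensionLT T.X₃ n] :
    IsSyzygySequence (T.map (ModuleCat.extendScalars.{u, u, u} f)) where
  __ := shortExact_map_extendScalars hT.toShortExact (hf T hT ‹_›)
  projective := have := hT.projective; extendScalars_obj_projective f T.X₂
  finite := have := hT.finite; extendScalars_obj_finite f T.X₂

lemma hasProjectiveDimensionLT [IsNoetherianRing R] {n : ℕ} (hf : PreservesSyzygySequences f n)
    (M : ModuleCat.{u} R) [Module.Finite R M] [HasProjectiveDimensionLT M n] :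
    HasProjectiveDimensionLT ((ModuleCat.extendScalars.{u, u, u} f).obj M) n := by
  induction n using Nat.twoStepInduction generalizing M with
  | zero =>
    rw [hasProjectiveDimensionLT_zero_iff_isZero]
    exact Functor.map_isZero _ (isZero_of_hasProjectiveDimensionLT_zero M)
  | one =>
    have : Projective M := projective_iff_hasProjectiveDimensionLT_one.2 ‹_›
    exact projective_iff_hasProjectiveDimensionLT_one.1 inferInstance
  | more n _ ih =>
    obtain ⟨T, hT, rfl⟩ := exists_isSyzygySequence M
    have := hT.finite_X₁
    have := hT.hasProjectiveDimensionLT_X₃_iff.1 ‹_›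
    exact (hf.isSyzygySequence_map hT).hasProjectiveDimensionLT_X₃_iff.2
      (ih (hf.of_le (Nat.le_succ _)) T.X₁)

end PreservesSyzygySequences

lemma map_extendScalars_mem_smul_top {M N : ModuleCat.{u} R} {I : Ideal R} {g : M ⟶ N}
    (hg : g.hom ∈ I • (⊤ : Submodule R (M →ₗ[R] N))) :
    ((ModuleCat.extendScalars.{u, u, u} f).map g).hom ∈
      I.map f • (⊤ : Submodule S (_ →ₗ[S] _)) := by
  refine Submodule.smul_induction_on
    (p := fun h => ((ModuleCat.extendScalars.{u, u, u} f).map (ModuleCat.ofHom h)).hom ∈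
      I.map f • (⊤ : Submodule S (_ →ₗ[S] _))) hg (fun a ha h _ => ?_) fun h k hh hk => ?_
  · have hsmul : ((ModuleCat.extendScalars.{u, u, u} f).map (ModuleCat.ofHom (a • h))).hom =
        f a • ((ModuleCat.extendScalars.{u, u, u} f).map (ModuleCat.ofHom h)).hom := by
      algebraize [f]
      exact (LinearMap.baseChange_smul a h).trans (algebraMap_smul S a _).symm
    rw [hsmul]
    exact Submodule.smul_mem_smul (Ideal.mem_map_of_mem f ha) trivial
  · rw [ModuleCat.ofHom_add, Functor.map_add, ModuleCat.hom_add]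
    exact add_mem hh hk

lemma nonempty_tensorProduct_equiv_extendScalars [A : Algebra R S] (hf : algebraMap R S = f)
    (M : ModuleCat.{u} R) :
    Nonempty (S ⊗[R] M ≃ₗ[S] (ModuleCat.extendScalars.{u, u, u} f).obj M) := by
  obtain rfl : A = f.toAlgebra := Algebra.algebra_ext _ _ fun r => by rw [hf]; rfl
  let _ := f.toAlgebra
  exact ⟨LinearEquiv.refl S (S ⊗[R] M)⟩

lemma nonempty_quotient_equiv_extendScalars (J : Ideal R) :
    Nonempty ((S ⧸ J.map f) ≃ₗ[S]
      (ModuleCat.extendScalars.{u, u, u} f).obj (ModuleCat.of R (R ⧸ J))) := by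
  let _ := f.toAlgebra
  exact ⟨Algebra.TensorProduct.quotIdealMapEquivTensorQuotAux S J⟩

end ExtendScalars

section AuslanderBuchsbaum

variable {R S : Type u} [CommRing R] [IsLocalRing R] [CommRing S] [IsLocalRing S]

lemma nonempty_retract_self_of_projective (M : ModuleCat.{u} R) [Module.Finite R M] [Projective M]
    [Nontrivial M] : Nonempty (Retract (ModuleCat.of R R) M) := by
  have : Module.Free R M := Module.free_of_flat_of_isLocalRing
  let b := Module.Free.chooseBasis R M
  obtain ⟨i⟩ := b.index_nonempty
  refine ⟨ModuleCat.ofHom (LinearMap.toSpanSingleton R M (b i)), ModuleCat.ofHom (b.coord i), ?_⟩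
  ext
  simp

lemma depth_extendScalars_le_depth_self_of_projective (f : R →+* S) (M : ModuleCat.{u} R)
    [Module.Finite R M] [Projective M] [Nontrivial M] :
    depth ((ModuleCat.extendScalars.{u, u, u} f).obj M) ≤ depth (ModuleCat.of S S) := by
  obtain ⟨r⟩ := nonempty_retract_self_of_projective M
  refine (depth_le_of_retract (r.map (ModuleCat.extendScalars.{u, u, u} f))).trans_eq ?_
  algebraize [f]
  exact depth_eq_of_iso (LinearEquiv.toModuleIso (TensorProduct.AlgebraTensorModule.rid R S S))

lemma succ_depth_X₃_le_depth_X₁ {S : ShortComplex (ModuleCat.{u} R)} (hS : S.ShortExact)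
    (hf : ∀ i : ℕ, i < depth S.X₁ + 1 → ∀ x : ExtResidueField S.X₁ i,
      x.comp (Ext.mk₀ S.f) (add_zero i) = 0) : depth S.X₃ + 1 ≤ depth S.X₁ := by
  by_contra! hlt
  have hle : depth S.X₁ ≤ depth S.X₃ := Order.le_of_lt_add_one hlt
  exact (succ_le_depth_X₁ hS hle hf).not_gt (ENat.lt_add_one_iff hlt.ne_top |>.2 le_rfl)

lemma extResidueField_comp_map_extendScalars_eq_zero {f : R →+* S} [IsLocalHom f]
    {M N : ModuleCat.{u} R} {g : M ⟶ N}
    (hg : g.hom ∈ maximalIdeal R • (⊤ : Submodule R (M →ₗ[R] N))) {i : ℕ}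
    (x : ExtResidueField ((ModuleCat.extendScalars.{u, u, u} f).obj M) i) :
    x.comp (Ext.mk₀ ((ModuleCat.extendScalars.{u, u, u} f).map g)) (add_zero i) = 0 := by
  have hle : (maximalIdeal R).map f ≤ maximalIdeal S := ((local_hom_TFAE f).out 0 2).1 ‹_›
  have hFg := map_extendScalars_mem_smul_top (f := f) hg
  exact extResidueField_comp_eq_zero (Submodule.smul_mono_left hle hFg) x

variable [IsNoetherianRing R]

lemma le_depth_of_add_le_depth (n : ℕ) (M : ModuleCat.{u} R) [Module.Finite R M]
    [hM : HasProjectiveDimensionLT M (n + 1)] {d : ℕ∞} (hd : d + n ≤ depth (ModuleCat.of R R)) :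
    d ≤ depth M := by
  induction n generalizing M d with
  | zero =>
    have : Projective M := projective_iff_hasProjectiveDimensionLT_one.2 hM
    exact (by simpa using hd : d ≤ _).trans (depth_le_depth_of_projective M)
  | succ n ih =>
    obtain ⟨S, hS, rfl⟩ := exists_isSyzygySequence M
    have := hS.finite_X₁
    have := hS.finite
    have := hS.projective
    have := hS.hasProjectiveDimensionLT_X₃_iff.1 hM
    refine le_depth_X₃ hS.toShortExact (ih S.X₁ ?_)
      ((le_self_add.trans hd).trans (depth_le_depth_of_projective S.X₂))
    rwa [add_assoc, add_comm 1, ← Nat.cast_succ]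

lemma depth_extendScalars_add_le_depth_self {f : R →+* S} [IsLocalHom f] (n : ℕ)
    (hf : PreservesSyzygySequences f (n + 1)) (M : ModuleCat.{u} R) [Module.Finite R M]
    [hM : HasProjectiveDimensionLT M (n + 1)] (h0 : ¬ HasProjectiveDimensionLT M n) :
    depth ((ModuleCat.extendScalars.{u, u, u} f).obj M) + n ≤ depth (ModuleCat.of S S) := by
  induction n generalizing M with
  | zero =>
    have : Projective M := projective_iff_hasProjectiveDimensionLT_one.2 hM
    rw [hasProjectiveDimensionLT_zero_iff_isZero, ModuleCat.isZero_iff_subsingleton,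
      not_subsingleton_iff_nontrivial] at h0
    simpa using depth_extendScalars_le_depth_self_of_projective f M
  | succ n ih =>
    obtain ⟨T, hT, rfl, hmin⟩ := exists_isSyzygySequence_range_le M
    have := hT.finite_X₁
    have hpd := hT.hasProjectiveDimensionLT_X₃_iff.1 hM
    have hFT := hf.isSyzygySequence_map hT
    set F := ModuleCat.extendScalars.{u, u, u} f
    have hF₁ : depth (F.obj T.X₁) + n ≤ depth (ModuleCat.of S S) :=
      ih (hf.of_le (Nat.le_succ _)) T.X₁ fun h => h0 (hT.hasProjectiveDimensionLT_X₃ h)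
    suffices h : depth (F.obj T.X₃) + 1 ≤ depth (F.obj T.X₁) by
      rw [Nat.cast_succ, add_comm (n : ℕ∞), ← add_assoc]
      exact (add_le_add_left h _).trans hF₁
    refine succ_depth_X₃_le_depth_X₁ (S := T.map F) hFT.toShortExact fun i hi x => ?_
    obtain _ | n := n
    · have : Projective T.X₁ := projective_iff_hasProjectiveDimensionLT_one.2 hpd
      exact extResidueField_comp_map_extendScalars_eq_zero
        (mem_smul_top_of_range_le_smul_top hmin) x
    · have := hFT.finite
      have := hFT.projective
      have hd : depth (F.obj T.X₁) + 1 ≤ depth (F.obj T.X₂) := calc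
        depth (F.obj T.X₁) + 1 ≤ depth (F.obj T.X₁) + (n + 1 : ℕ) := by gcongr; simp
        _ ≤ depth (ModuleCat.of S S) := hF₁
        _ ≤ depth (F.obj T.X₂) := depth_le_depth_of_projective (T.map F).X₂
      exact (le_depth_iff.1 hd i hi).elim _ _

lemma depth_extendScalars_add_eq_depth_self [IsNoetherianRing S] {f : R →+* S} [IsLocalHom f]
    {n : ℕ} (hf : PreservesSyzygySequences f (n + 1)) (M : ModuleCat.{u} R) [Module.Finite R M]
    [HasProjectiveDimensionLT M (n + 1)] (hM : ¬ HasProjectiveDimensionLT M n) :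
    depth ((ModuleCat.extendScalars.{u, u, u} f).obj M) + n = depth (ModuleCat.of S S) := by
  have hle := depth_extendScalars_add_le_depth_self n hf M hM
  have hsub := tsub_add_cancel_of_le (le_add_self.trans hle)
  have := hf.hasProjectiveDimensionLT M
  refine hle.antisymm ?_
  rw [← hsub]
  gcongr
  exact le_depth_of_add_le_depth n _ hsub.le

lemma depth_add_eq_depth_self {n : ℕ} (M : ModuleCat.{u} R) [Module.Finite R M]
    [HasProjectiveDimensionLT M (n + 1)] (hM : ¬ HasProjectiveDimensionLT M n) :
    depth M + n = depth (ModuleCat.of R R) := by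
  rw [← depth_eq_of_iso (N := M) ((ModuleCat.extendScalarsId R).app M)]
  exact depth_extendScalars_add_eq_depth_self (.of_flat (.id R) _) M hM

lemma one_le_depth_extendScalars_X₁ {f : R →+* R} {n : ℕ} (hf : PreservesSyzygySequences f (n + 1))
    {T : ShortComplex (ModuleCat.{u} R)} (hT : IsSyzygySequence T)
    [hpd : HasProjectiveDimensionLT T.X₃ (n + 2)] (h : ¬ HasProjectiveDimensionLT T.X₃ (n + 1)) :
    1 ≤ depth ((ModuleCat.extendScalars.{u, u, u} f).obj T.X₁) := by
  have := hT.finite_X₁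
  have := hT.finite_X₃
  have := hT.hasProjectiveDimensionLT_X₃_iff.1 hpd
  have := hf.hasProjectiveDimensionLT T.X₁
  refine le_depth_of_add_le_depth n _ ?_
  rw [← depth_add_eq_depth_self T.X₃ h, Nat.cast_succ, add_comm 1]
  exact le_add_self

end AuslanderBuchsbaum

section Localization

open Limits TensorProduct

variable {R : Type u} [CommRing R] (P : Ideal R) [P.IsPrime]

/-- The functor `M ↦ M_P` of localization at the prime `P`, as an extension of scalars. -/
noncomputable abbrev localizationFunctor :
    ModuleCat.{u} R ⥤ ModuleCat.{u} (Localization.AtPrime P) :=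
  ModuleCat.extendScalars.{u, u, u} (algebraMap R (Localization.AtPrime P))

lemma flat_algebraMap_localizationAtPrime : (algebraMap R (Localization.AtPrime P)).Flat :=
  RingHom.flat_algebraMap_iff.2 (IsLocalization.flat _ P.primeCompl)

lemma charP_localizationAtPrime (p : ℕ) [hp : Fact p.Prime] [CharP R p] :
    CharP (Localization.AtPrime P) p := by
  rw [CharP.charP_iff_prime_eq_zero hp.out, ← map_natCast (algebraMap R _), CharP.cast_eq_zero,
    map_zero]

variable {P} [IsNoetherianRing R]

lemma maximalIdeal_mem_associatedPrimes_iff_of_isLocalizedModule {M N : Type*} [AddCommGroup M]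
    [Module R M] [AddCommGroup N] [Module R N] [Module (Localization.AtPrime P) N]
    [IsScalarTower R (Localization.AtPrime P) N] (f : M →ₗ[R] N)
    [IsLocalizedModule P.primeCompl f] :
    maximalIdeal (Localization.AtPrime P) ∈ associatedPrimes (Localization.AtPrime P) N ↔
      P ∈ associatedPrimes R M := by
  rw [←
    Module.associatedPrimes.preimage_comap_associatedPrimes_eq_associatedPrimes_of_isLocalizedModule
    P.primeCompl (Localization.AtPrime P) f, Set.mem_preimage]
  have hP : (maximalIdeal (Localization.AtPrime P)).comap (algebraMap R _) = P :=
    Localization.AtPrime.under_maximalIdeal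
  rw [hP]

lemma mem_associatedPrimes_iff_depth_eq_zero {M : ModuleCat.{u} R} :
    P ∈ associatedPrimes R M ↔ depth ((localizationFunctor P).obj M) = 0 := by
  obtain ⟨e⟩ := nonempty_tensorProduct_equiv_extendScalars
    (f := algebraMap R (Localization.AtPrime P)) rfl M
  have : IsLocalizedModule P.primeCompl (TensorProduct.mk R (Localization.AtPrime P) M 1) :=
    (isLocalizedModule_iff_isBaseChange P.primeCompl (Localization.AtPrime P) _).2
      (TensorProduct.isBaseChange R M (Localization.AtPrime P))
  rw [depth_eq_zero_iff, ← LinearEquiv.AssociatedPrimes.eq e,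
    maximalIdeal_mem_associatedPrimes_iff_of_isLocalizedModule
      (TensorProduct.mk R (Localization.AtPrime P) M 1)]

lemma mono_of_mono_map_localizationFunctor {M N : ModuleCat.{u} R} (g : M ⟶ N)
    (h : ∀ (P : Ideal R) [P.IsPrime], P ∈ associatedPrimes R M →
      Mono ((localizationFunctor P).map g)) : Mono g := by
  refine Preadditive.mono_of_isZero_kernel g ?_
  by_contra hker
  have : Nontrivial ↑(kernel g) := by
    rwa [← not_subsingleton_iff_nontrivial, ← ModuleCat.isZero_iff_subsingleton]
  obtain ⟨P, hP⟩ := associatedPrimes.nonempty R ↑(kernel g)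
  have := hP.isPrime
  have := h P (associatedPrimes.subset_of_injective
    ((ModuleCat.mono_iff_injective (kernel.ι g)).1 inferInstance) hP)
  have := mono_map_extendScalars_of_flat (flat_algebraMap_localizationAtPrime P) (kernel.ι g)
  have hι : (localizationFunctor P).map (kernel.ι g) = 0 := by
    rw [← cancel_mono ((localizationFunctor P).map g), ← Functor.map_comp, kernel.condition,
      zero_comp, Functor.map_zero]
  have hzero := IsZero.of_mono_eq_zero _ hι
  refine Order.one_le_iff_ne_zero.1 (one_le_depth_iff.2 ?_)
    (mem_associatedPrimes_iff_depth_eq_zero.1 hP)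
  exact ⟨hzero.eq_of_tgt⟩

end Localization

section Frobenius

variable (R : Type u) [CommRing R] (p e : ℕ) [Fact p.Prime] [CharP R p]

/-- The `e`-th iterate of the Peskine–Szpiro functor: base change along the `p ^ e`-power
Frobenius endomorphism of `R`. -/
noncomputable abbrev frobeniusFunctor : ModuleCat.{u} R ⥤ ModuleCat.{u} R :=
  ModuleCat.extendScalars.{u, u, u} (iterateFrobenius R p e)

instance isLocalHom_iterateFrobenius : IsLocalHom (iterateFrobenius R p e) where
  map_nonunit a ha := (isUnit_pow_iff (pow_ne_zero e (Fact.out : p.Prime).ne_zero)).1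
    (by rwa [iterateFrobenius_def] at ha)

variable {R}

lemma nonempty_frobeniusFunctor_comp_iso {S : Type u} [CommRing S] [CharP S p] (f : R →+* S) :
    Nonempty (frobeniusFunctor R p e ⋙ ModuleCat.extendScalars.{u, u, u} f ≅
      ModuleCat.extendScalars.{u, u, u} f ⋙ frobeniusFunctor S p e) := by
  have hcomm : f.comp (iterateFrobenius R p e) = (iterateFrobenius S p e).comp f :=
    f.iterateFrobenius_comm p e
  exact ⟨(ModuleCat.extendScalarsComp _ _).symm ≪≫ eqToIso (by rw [hcomm]) ≪≫
    ModuleCat.extendScalarsComp _ _⟩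

lemma mono_map_iff_of_iso {C D : Type*} [Category C] [Category D] {F G : C ⥤ D} (α : F ≅ G)
    {X Y : C} (g : X ⟶ Y) : Mono (F.map g) ↔ Mono (G.map g) :=
  (MorphismProperty.monomorphisms D).arrow_mk_iso_iff
    (Arrow.isoMk (α.app X) (α.app Y) (α.hom.naturality g).symm)

variable [IsNoetherianRing R]

variable (R) in
lemma preservesSyzygySequences_iterateFrobenius (n : ℕ) :
    PreservesSyzygySequences (iterateFrobenius R p e) n := by
  induction n using Nat.twoStepInduction generalizing R with
  | zero => exact (PreservesSyzygySequences.one _).of_le zero_le_one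
  | one => exact .one _
  | more n _ ih =>
    intro T hT hpd
    refine mono_of_mono_map_localizationFunctor _ fun P _ hP => ?_
    have := charP_localizationAtPrime P p
    have hflat := PreservesSyzygySequences.of_flat (flat_algebraMap_localizationAtPrime P) (n + 2)
    have hTP : IsSyzygySequence (T.map (localizationFunctor P)) := hflat.isSyzygySequence_map hT
    obtain ⟨α⟩ := nonempty_frobeniusFunctor_comp_iso p e (algebraMap R (Localization.AtPrime P))
    by_cases h : HasProjectiveDimensionLT ((localizationFunctor P).obj T.X₃) (n + 1)
    · have hmono := ih (Localization.AtPrime P) _ hTP h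
      exact (mono_map_iff_of_iso α T.f).2 hmono
    · have := hT.finite_X₃
      have hpdP : HasProjectiveDimensionLT (T.map (localizationFunctor P)).X₃ (n + 2) :=
        hflat.hasProjectiveDimensionLT T.X₃
      have hdepth := one_le_depth_extendScalars_X₁ (ih _) hTP h
      rw [mem_associatedPrimes_iff_depth_eq_zero] at hP
      exact absurd ((depth_eq_of_iso (α.app T.X₁)).symm.trans hP)
        (Order.one_le_iff_ne_zero.1 hdepth)

variable (M : ModuleCat.{u} R) [Module.Finite R M] (n : ℕ)

lemma depth_frobeniusFunctor_obj [IsLocalRing R] [hM : HasProjectiveDimensionLT M n] :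
    depth ((frobeniusFunctor R p e).obj M) = depth M := by
  induction n generalizing hM with
  | zero =>
    have h0 := (hasProjectiveDimensionLT_zero_iff_isZero M).1 hM
    exact depth_eq_of_iso ((Functor.map_isZero _ h0).iso h0)
  | succ n ih =>
    by_cases h : HasProjectiveDimensionLT M n
    · exact ih
    · have hFM := depth_extendScalars_add_eq_depth_self
        (preservesSyzygySequences_iterateFrobenius R p e (n + 1)) M h
      exact ENat.add_left_injective_of_ne_top (ENat.natCast_ne_top n)
        (hFM.trans (depth_add_eq_depth_self M h).symm)

lemma associatedPrimes_frobeniusFunctor_obj [HasProjectiveDimensionLT M n] :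
    associatedPrimes R ((frobeniusFunctor R p e).obj M) = associatedPrimes R M := by
  have hdepth (P : Ideal R) [P.IsPrime] :
      depth ((localizationFunctor P).obj ((frobeniusFunctor R p e).obj M)) =
        depth ((localizationFunctor P).obj M) := by
    have := charP_localizationAtPrime P p
    have := (PreservesSyzygySequences.of_flat (flat_algebraMap_localizationAtPrime P)
      n).hasProjectiveDimensionLT M
    obtain ⟨α⟩ := nonempty_frobeniusFunctor_comp_iso p e (algebraMap R (Localization.AtPrime P))
    exact (depth_eq_of_iso (α.app M)).trans (depth_frobeniusFunctor_obj p e _ n)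
  ext P
  constructor <;> intro hP <;> have := hP.isPrime <;>
    simpa only [mem_associatedPrimes_iff_depth_eq_zero, hdepth P] using hP

end Frobenius

section BracketPower

variable {R : Type u} [CommRing R]

lemma exists_hasProjectiveDimensionLT {M : Type u} [AddCommGroup M] [Module R M]
    (hM : HasFiniteProjectiveDimension R M) :
    ∃ n, HasProjectiveDimensionLT (ModuleCat.of R M) n := by
  obtain ⟨P, n, hP⟩ := hM
  refine ⟨n + 1, .mk fun i hi Y x => ?_⟩
  obtain ⟨f, hf, rfl⟩ := P.extMk_surjective x (i + 1) rfl
  obtain rfl := (hP i hi).eq_of_src f 0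
  exact P.extMk_zero _ _

variable [IsNoetherianRing R]

lemma associatedPrimes_quotient_bracketPow (p e : ℕ) [Fact p.Prime] [CharP R p] {J : Ideal R}
    (hJ : HasFiniteProjectiveDimension R (R ⧸ J)) :
    associatedPrimes R (R ⧸ bracketPow J (p ^ e)) = associatedPrimes R (R ⧸ J) := by
  obtain ⟨n, _⟩ := exists_hasProjectiveDimensionLT hJ
  obtain ⟨φ⟩ := nonempty_quotient_equiv_extendScalars (f := iterateFrobenius R p e) J
  have : Module.Finite R (ModuleCat.of R (R ⧸ J)) := inferInstanceAs (Module.Finite R (R ⧸ J))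
  exact (LinearEquiv.AssociatedPrimes.eq φ).trans
    (associatedPrimes_frobeniusFunctor_obj p e (ModuleCat.of R (R ⧸ J)) n)

variable {M : Type*} [AddCommGroup M] [Module R M]

lemma gammaTorsion_eq_bot_of_notMem_associatedPrimes {I : Ideal R} [hI : I.IsMaximal]
    (h : I ∉ associatedPrimes R M) : gammaTorsion I M = ⊥ := by
  refine (Submodule.eq_bot_iff _).2 fun z ⟨n, hn⟩ => ?_
  by_contra hz
  obtain ⟨Q, hQ, hle⟩ := exists_le_isAssociatedPrime_of_isNoetherianRing R z hz
  have := hQ.isPrime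
  have hIQ : I ≤ Q := Ideal.IsPrime.le_of_pow_le (n := n) fun a ha => hle (by simpa using hn a ha)
  exact h (hI.eq_of_le hQ.isPrime.ne_top hIQ ▸ hQ)

lemma gammaTorsion_localizedModule_eq_bot {P : Ideal R} [P.IsPrime]
    (hP : P ∉ associatedPrimes R M) :
    gammaTorsion (maximalIdeal (Localization.AtPrime P)) (LocalizedModule P.primeCompl M) = ⊥ := by
  refine gammaTorsion_eq_bot_of_notMem_associatedPrimes ?_
  rwa [maximalIdeal_mem_associatedPrimes_iff_of_isLocalizedModule
    (LocalizedModule.mkLinearMap P.primeCompl M)]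

end BracketPower

theorem stmt17_general (R : Type*) [CommRing R] [IsNoetherianRing R]
    (p : ℕ) (hp : p.Prime) [CharP R p] (J : Ideal R)
    (hproj : HasFiniteProjectiveDimension R (R ⧸ J)) (q : ℕ) (hq : ∃ e : ℕ, q = p ^ e) :
    associatedPrimes R (R ⧸ bracketPow J q) = associatedPrimes R (R ⧸ J) ∧
    ∀ I : Ideal R,
      associatedPrimes R ↥(subQuot (bracketPow J q) (bracketPow I q)) ⊆
        associatedPrimes R (R ⧸ J) ∧
      ∀ (𝔭 : Ideal R) [𝔭.IsPrime], 𝔭 ∉ associatedPrimes R (R ⧸ J) →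
        gammaTorsion (maximalIdeal (Localization.AtPrime 𝔭))
          (LocalizedModule 𝔭.primeCompl
            ↥(subQuot (bracketPow J q) (bracketPow I q))) = ⊥ := by
  obtain ⟨e, rfl⟩ := hq
  have : Fact p.Prime := ⟨hp⟩
  have hAss := associatedPrimes_quotient_bracketPow p e hproj
  refine ⟨hAss, fun I => ?_⟩
  have hsub := hAss ▸ associatedPrimes.subset_of_injective
    (subQuot (bracketPow J (p ^ e)) (bracketPow I (p ^ e))).subtype_injective
  exact ⟨hsub, fun 𝔭 _ h𝔭 => gammaTorsion_localizedModule_eq_bot fun h => h𝔭 (hsub h)⟩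

/-- Let `R` be Noetherian of characteristic `p`, `J` an ideal such that
`R/J` has finite projective dimension and `J` has no embedded primes, and `q` a power
of `p`.  Then `Ass(R/J^{[q]}) = Ass(R/J) = Min(R/J)`; consequently, for any `I ⊇ J`,
`Ass(I^{[q]}/J^{[q]}) ⊆ Min(R/J)` and `H⁰_𝔭(I^{[q]}/J^{[q]}) = 0` for every prime
`𝔭 ∉ Min(R/J)`. -/
theorem stmt17 (R : Type*) [CommRing R] [IsNoetherianRing R]
    (p : ℕ) (hp : p.Prime) [CharP R p]
    (J : Ideal R)
    (hproj : HasFiniteProjectiveDimension R (R ⧸ J))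
    (hnoemb : associatedPrimes R (R ⧸ J) = J.minimalPrimes)
    (q : ℕ) (hq : ∃ e : ℕ, q = p ^ e) :
    associatedPrimes R (R ⧸ bracketPow J q) = J.minimalPrimes ∧
    ∀ I : Ideal R, J ≤ I →
      associatedPrimes R ↥(subQuot (bracketPow J q) (bracketPow I q)) ⊆
        J.minimalPrimes ∧
      ∀ (𝔭 : Ideal R) [𝔭.IsPrime], 𝔭 ∉ J.minimalPrimes →
        gammaTorsion (IsLocalRing.maximalIdeal (Localization.AtPrime 𝔭))
          (LocalizedModule 𝔭.primeCompl
            ↥(subQuot (bracketPow J q) (bracketPow I q))) = ⊥ :=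
  hnoemb ▸ (stmt17_general R p hp J hproj q hq).imp_right fun h I _ => h I
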